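/- There exist constants 0<γ₀≤γ₁ (one may take γ₀ to be the unique positive solution of γ·e^γ=1 and γ₁=e²) with the following property: for every weighted graph G=(V,p,μ) with bounded geometry with constant α>0 satisfying CD(K,∞) with K≥0, every u₀∈L^∞(V,μ) with ‖Γu₀‖_∞<α/2, and u:[0,∞)→L^∞(V,μ) the solution of the modified heat equation with initial data u₀: (1) for all γ≥γ₁, all t>0 and all x∈V, P_t(e^{γu₀})(x) ≥ e^{γ·u(t)(x)}; and (2) for all γ with 0<γ≤γ₀, all t>0 and all x∈V, P_t(e^{γu₀})(x) ≤ e^{γ·u(t)(x)}. -/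

import Mathlib

/-- A weighted graph `G = (V, p, μ)`: a nonnegative kernel `p` and a positive
measure `μ` on the vertex set `V`, such that `G` is locally finite, `p` is a
Markov kernel, and `G` is connected.  Vertices `x, y` are neighbours (`x ∼ y`)
iff `0 < p x y`. -/
structure WeightedGraph (V : Type*) where
  p : V → V → ℝ
  μ : V → ℝ
  p_nonneg : ∀ x y, 0 ≤ p x y
  μ_pos : ∀ x, 0 < μ x
  locallyFinite : ∀ x, {y | 0 < p x y}.Finite
  markov : ∀ x, HasSum (p x) 1
  connected : ∀ x y : V, ∃ n : ℕ, ∃ c : Fin (n + 1) → V,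
      c 0 = x ∧ c (Fin.last n) = y ∧ ∀ i : Fin n, 0 < p (c i.castSucc) (c i.succ)

namespace WeightedGraph

variable {V : Type*} (G : WeightedGraph V)

/-- The Laplacian `Δ f (x) = ∑_{y ∼ x} p x y * (f y - f x)`.  (Summing over all
of `V` is the same, since `p x y = 0` unless `y ∼ x`.) -/
noncomputable def lap (f : V → ℝ) (x : V) : ℝ := ∑' y, G.p x y * (f y - f x)

/-- The carré du champ `Γ f (x) = (1/2) ∑_{y ∼ x} p x y * (f y - f x)^2`. -/
noncomputable def gamma (f : V → ℝ) (x : V) : ℝ := (1 / 2) * ∑' y, G.p x y * (f y - f x) ^ 2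

/-- The bilinear carré du champ
`Γ(f,g)(x) = (1/2) ∑_{y ∼ x} p x y * (f y - f x) * (g y - g x)`. -/
noncomputable def gammaBil (f g : V → ℝ) (x : V) : ℝ :=
  (1 / 2) * ∑' y, G.p x y * (f y - f x) * (g y - g x)

/-- The iterated carré du champ `Γ₂ f = (1/2) Δ (Γ f) - Γ(f, Δ f)`. -/
noncomputable def gamma2 (f : V → ℝ) (x : V) : ℝ :=
  (1 / 2) * G.lap (G.gamma f) x - G.gammaBil f (G.lap f) x

/-- Bounded geometry with constant `α > 0`: the uniform ellipticity condition (A1)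
`p x y ≥ α` whenever `x ∼ y`, and the reversibility condition (A2)
`p x y * μ x = p y x * μ y`. -/
def BoundedGeometry (α : ℝ) : Prop :=
  0 < α ∧ (∀ x y, 0 < G.p x y → α ≤ G.p x y) ∧ ∀ x y, G.p x y * G.μ x = G.p y x * G.μ y

/-- The Bakry–Émery curvature-dimension condition `CD(K, n)`:
`Γ₂ f ≥ (1/n) (Δ f)² + K Γ f`. -/
def CD (K : ℝ) (n : ℕ) : Prop :=
  ∀ f : V → ℝ, ∀ x : V, (1 / (n : ℝ)) * G.lap f x ^ 2 + K * G.gamma f x ≤ G.gamma2 f x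

/-- The Bakry–Émery curvature-dimension condition `CD(K, ∞)`: `Γ₂ f ≥ K Γ f`. -/
def CDInfty (K : ℝ) : Prop :=
  ∀ f : V → ℝ, ∀ x : V, K * G.gamma f x ≤ G.gamma2 f x

/-- The graph distance `d(x,y)`: the least length of a path of consecutive
neighbours joining `x` to `y` (and `0` if `x = y`). -/
noncomputable def dist (x y : V) : ℕ :=
  sInf {n : ℕ | ∃ c : Fin (n + 1) → V,
    c 0 = x ∧ c (Fin.last n) = y ∧ ∀ i : Fin n, 0 < G.p (c i.castSucc) (c i.succ)}

/-- The measure `μ(B(x,r)) = ∑_{y : d(x,y) ≤ r} μ y` of the closed ball `B(x,r)`. -/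
noncomputable def ballMeasure (x : V) (r : ℝ) : ℝ :=
  ∑' y : {y : V // (G.dist x y : ℝ) ≤ r}, G.μ y

end WeightedGraph

/-- The sup norm `‖f‖_∞ = sup_x |f x|` of a (bounded) function on `V`. -/
noncomputable def supNorm {V : Type*} (f : V → ℝ) : ℝ := ⨆ x, |f x|

/-- The space `L^∞(V, μ)` of bounded functions on `V`, with the sup norm
`‖f‖_∞ = sup_x |f x|`. -/
noncomputable abbrev Linf (V : Type*) := lp (fun _ : V => ℝ) ⊤

/-- `u : [0,∞) → L^∞(V,μ)` is a solution of the modified heat equation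
`∂ₜ u = Δ u + Γ u` with initial data `u₀` and derivative `u'`: `u` is continuous
on `[0,∞)`, differentiable on `(0,∞)` with derivative `u'` continuous there,
`u 0 = u₀`, and `u' t = Δ (u t) + Γ (u t)` for all `t > 0`. -/
structure IsMHESolution {V : Type*} (G : WeightedGraph V) (u u' : ℝ → Linf V)
    (u₀ : Linf V) : Prop where
  init : u 0 = u₀
  cont : ContinuousOn u (Set.Ici 0)
  derivCont : ContinuousOn u' (Set.Ioi 0)
  hasDeriv : ∀ t > (0 : ℝ), HasDerivAt u (u' t) t
  eqn : ∀ t > (0 : ℝ), ∀ x : V, u' t x = G.lap (fun y => u t y) x + G.gamma (fun y => u t y) x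

namespace WeightedGraph

/-- The heat semigroup `P_t = e^{tΔ} = ∑_{k ≥ 0} t^k Δ^k / k!`, applied pointwise. -/
noncomputable def heatSem {V : Type*} (G : WeightedGraph V) (t : ℝ) (f : V → ℝ) (x : V) : ℝ :=
  ∑' k : ℕ, t ^ k / (Nat.factorial k : ℝ) * ((G.lap)^[k] f) x

end WeightedGraph

/-!
Along the flow, `∂ₜ Γ(u) = 2 Γ(u, Δu + Γ(u)) ≤ Δ Γ(u) + 2 Γ(u, Γ(u))` by `CD(0, ∞)`. As long as
`Γ(u) < α / 2`, ellipticity makes `u` vary by at most `1` along every edge, so the right-hand side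
is a Laplacian of `Γ(u)` with the nonnegative weights `p(x, y) (1 + u(y) - u(x))`, and the maximum
principle propagates the bound `Γ(u) < α / 2` to all times. Consequently every increment
`d = u(y) - u(x)` along an edge satisfies `|d| ≤ 1`, where `γ (d + d² / 2)` is at most
`exp (γ d) - 1` if `γ` is large and at least `exp (γ d) - 1` if `γ` is small. Summed over the
neighbours this says that `exp (γ u)` is a subsolution, respectively a supersolution, of the heat
equation, to be compared with `P_t (exp (γ u₀))`.
-/

open Set Filter Topology

section OperatorExponential

variable {E : Type*} [NormedAddCommGroup E] [NormedSpace ℝ E] (A : E →L[ℝ] E)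

theorem exp_zero_smul_apply (f : E) : NormedSpace.exp ((0 : ℝ) • A) f = f := by
  rw [zero_smul, NormedSpace.exp_zero, one_apply_eq_self]

variable [CompleteSpace E]

theorem hasSum_exp_smul_apply (t : ℝ) (f : E) :
    HasSum (fun k : ℕ => (t ^ k / (k.factorial : ℝ)) • (A ^ k) f)
      (NormedSpace.exp (t • A) f) := by
  have hsum := (NormedSpace.exp_series_hasSum_exp' (𝕂 := ℝ) (t • A)).mapL
    (ContinuousLinearMap.apply ℝ E f)
  simpa only [smul_pow, smul_smul, ContinuousLinearMap.apply_apply, inv_mul_eq_div] using! hsum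

theorem hasDerivAt_exp_smul_apply (f : E) (t : ℝ) :
    HasDerivAt (fun s : ℝ => NormedSpace.exp (s • A) f) (A (NormedSpace.exp (t • A) f)) t :=
  (ContinuousLinearMap.apply ℝ E f).hasFDerivAt.comp_hasDerivAt t
    (hasDerivAt_exp_smul_const' (𝕂 := ℝ) A t)

end OperatorExponential

namespace Linf

variable {V : Type*}

theorem bddAbove_range (f : Linf V) : BddAbove (range f) :=
  ⟨‖f‖, forall_mem_range.2 fun x =>
    (le_abs_self _).trans (lp.norm_apply_le_norm ENNReal.top_ne_zero f x)⟩

theorem apply_le_iSup (f : Linf V) (x : V) : f x ≤ ⨆ y, f y :=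
  le_ciSup (bddAbove_range f) x

theorem apply_le_supNorm (f : Linf V) (x : V) : f x ≤ supNorm f := by
  have hbdd : BddAbove (range fun y => |f y|) :=
    ⟨‖f‖, forall_mem_range.2 (lp.norm_apply_le_norm ENNReal.top_ne_zero f)⟩
  exact (le_abs_self _).trans (le_ciSup hbdd x)

theorem exp_apply (f : Linf V) (x : V) :
    (NormedSpace.exp f : Linf V) x = Real.exp (f x) := by
  let eval : Linf V →+* ℝ :=
    { toFun := fun g => g x
      map_one' := rfl
      map_mul' := fun _ _ => rfl
      map_zero' := rfl
      map_add' := fun _ _ => rfl }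
  rw [Real.exp_eq_exp_ℝ]
  exact NormedSpace.map_exp eval (lp.evalCLM ℝ (fun _ : V => ℝ) ⊤ x).continuous f

theorem coe_exp_smul (γ : ℝ) (f : Linf V) :
    ⇑(NormedSpace.exp (γ • f) : Linf V) = fun x => Real.exp (γ * f x) :=
  funext fun x => exp_apply (γ • f) x

section Supremum

variable [Nonempty V]

theorem iSup_le_iSup_add_norm_sub (f g : Linf V) : ⨆ x, f x ≤ (⨆ x, g x) + ‖f - g‖ := by
  refine ciSup_le fun x => ?_
  have hdiff : f x - g x ≤ ‖f - g‖ :=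
    (le_abs_self _).trans (lp.norm_apply_le_norm ENNReal.top_ne_zero (f - g) x)
  linarith [apply_le_iSup g x]

theorem continuous_iSup : Continuous fun f : Linf V => ⨆ x, f x :=
  (LipschitzWith.of_le_add fun f g => by
    simpa only [dist_eq_norm] using iSup_le_iSup_add_norm_sub f g).continuous

theorem iSup_add_smul_le {f h : Linf V} {C D ε : ℝ} (hε : 0 ≤ ε) (hεC : ε * C ≤ 1)
    (hh : ∀ x, h x ≤ C * ((⨆ y, f y) - f x) + D) :
    ⨆ x, (f + ε • h : Linf V) x ≤ (⨆ x, f x) + ε * D := by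
  refine ciSup_le fun x => ?_
  have hgap : 0 ≤ (⨆ y, f y) - f x := sub_nonneg.2 (apply_le_iSup f x)
  calc (f + ε • h : Linf V) x = f x + ε * h x := rfl
    _ ≤ f x + ε * (C * ((⨆ y, f y) - f x) + D) := by gcongr; exact hh x
    _ = f x + ε * C * ((⨆ y, f y) - f x) + ε * D := by ring
    _ ≤ f x + 1 * ((⨆ y, f y) - f x) + ε * D := by gcongr
    _ = (⨆ y, f y) + ε * D := by ring

theorem eventually_slope_iSup_lt {g : ℝ → Linf V} {h : Linf V} {s C D r : ℝ}
    (hg : HasDerivWithinAt g h (Ici s) s) (hh : ∀ x, h x ≤ C * ((⨆ y, g s y) - g s x) + D)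
    (hr : D < r) : ∀ᶠ z in 𝓝[>] s, slope (fun t => ⨆ x, g t x) s z < r := by
  have htaylor : ∀ᶠ z in 𝓝[>] s, ‖g z - g s - (z - s) • h‖ ≤ (r - D) / 2 * ‖z - s‖ :=
    ((hasDerivWithinAt_iff_isLittleO.1 hg).def (by linarith)).filter_mono
      (nhdsWithin_mono s Ioi_subset_Ici_self)
  have hstep : ∀ᶠ z in 𝓝[>] s, (z - s) * C ≤ 1 := by
    have hlim : Tendsto (fun z => (z - s) * C) (𝓝 s) (𝓝 ((s - s) * C)) :=
      Continuous.tendsto (by fun_prop) s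
    rw [sub_self, zero_mul] at hlim
    exact (hlim.mono_left nhdsWithin_le_nhds).eventually (eventually_le_nhds one_pos)
  filter_upwards [htaylor, hstep, self_mem_nhdsWithin] with z hz hzC (hsz : s < z)
  have hpos : 0 < z - s := sub_pos.2 hsz
  rw [Real.norm_of_nonneg hpos.le, sub_sub] at hz
  rw [slope_def_field, div_lt_iff₀ hpos]
  have hz_le := iSup_le_iSup_add_norm_sub (g z) (g s + (z - s) • h)
  have heuler := iSup_add_smul_le hpos.le hzC hh
  nlinarith

-- The barrier `B t = sup (g a) + ε (t - a)` stays below `θ`, and the supremum cannot cross it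
-- because its slope is at most `0 < ε` wherever the two meet.
theorem iSup_lt_of_hasDerivWithinAt {g g' : ℝ → Linf V} {a b C θ : ℝ} (hC : 0 ≤ C)
    (hg : ContinuousOn g (Icc a b)) (hg' : ∀ t ∈ Ico a b, HasDerivWithinAt g (g' t) (Ici t) t)
    (hdiss : ∀ t ∈ Ico a b, ⨆ x, g t x < θ → ∀ x, g' t x ≤ C * ((⨆ y, g t y) - g t x))
    (ha : ⨆ x, g a x < θ) {t : ℝ} (ht : t ∈ Icc a b) : ⨆ x, g t x < θ := by
  obtain ⟨ε, hε, hεθ⟩ : ∃ ε > 0, (⨆ x, g a x) + ε * (b - a) < θ := by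
    have hba : 0 ≤ b - a := sub_nonneg.2 (ht.1.trans ht.2)
    refine ⟨(θ - ⨆ x, g a x) / (b - a + 1), by have := sub_pos.2 ha; positivity, ?_⟩
    rw [div_mul_eq_mul_div, ← lt_sub_iff_add_lt', div_lt_iff₀ (by positivity)]
    nlinarith
  have hbarrier : ∀ s ≤ b, (⨆ x, g a x) + ε * (s - a) < θ := fun s hs => by nlinarith
  have hslope : ∀ s ∈ Ico a b, ∃ D, (∀ x, g' s x ≤ C * ((⨆ y, g s y) - g s x) + D) ∧
      (⨆ x, g s x < θ → D ≤ 0) := by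
    intro s hs
    by_cases hθ : ⨆ x, g s x < θ
    · exact ⟨0, by simpa only [add_zero] using hdiss s hs hθ, fun _ => le_rfl⟩
    · refine ⟨‖g' s‖, fun x => ?_, fun h => absurd h hθ⟩
      have hgap := mul_nonneg hC (sub_nonneg.2 (apply_le_iSup (g s) x))
      have hnorm := (le_abs_self _).trans (lp.norm_apply_le_norm ENNReal.top_ne_zero (g' s) x)
      linarith
  choose! D hD hDθ using hslope
  refine (image_le_of_liminf_slope_right_lt_deriv_boundary' (f' := D)
    (B := fun s => (⨆ x, g a x) + ε * (s - a)) (B' := fun _ => ε)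
    (continuous_iSup.comp_continuousOn hg)
    (fun s hs r hr => (eventually_slope_iSup_lt (hg' s hs) (hD s hs) hr).frequently)
    (by simp) (by fun_prop) (fun s _ => ?_) (fun s hs heq => ?_) ht).trans_lt (hbarrier t ht.2)
  · simpa using (((hasDerivWithinAt_id s _).sub_const a).const_mul ε).const_add (⨆ x, g a x)
  · exact (hDθ s hs (heq.trans_lt (hbarrier s hs.2.le))).trans_lt hε

end Supremum

end Linf

namespace WeightedGraph

variable {V : Type*} (G : WeightedGraph V)

/-- The neighbours of `x`, as a finite set; sums over `V` weighted by `p x` reduce to it. -/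
noncomputable def neighbors (x : V) : Finset V := (G.locallyFinite x).toFinset

variable {G} in
theorem mem_neighbors {x y : V} : y ∈ G.neighbors x ↔ 0 < G.p x y := by
  simp [neighbors]

theorem tsum_p_mul (φ : V → ℝ) (x : V) :
    ∑' y, G.p x y * φ y = ∑ y ∈ G.neighbors x, G.p x y * φ y :=
  tsum_eq_sum fun y hy => by
    rw [le_antisymm (not_lt.1 (mem_neighbors.not.1 hy)) (G.p_nonneg x y), zero_mul]

theorem sum_neighbors_p (x : V) : ∑ y ∈ G.neighbors x, G.p x y = 1 := by
  simpa only [mul_one, (G.markov x).tsum_eq] using (G.tsum_p_mul (fun _ => 1) x).symm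

theorem lap_eq_sum (f : V → ℝ) (x : V) :
    G.lap f x = ∑ y ∈ G.neighbors x, G.p x y * (f y - f x) :=
  G.tsum_p_mul _ x

theorem gammaBil_eq_sum (f g : V → ℝ) (x : V) :
    G.gammaBil f g x =
      1 / 2 * ∑ y ∈ G.neighbors x, G.p x y * ((f y - f x) * (g y - g x)) := by
  simp only [gammaBil, mul_assoc, tsum_p_mul]

theorem gammaBil_self (f : V → ℝ) : G.gammaBil f f = G.gamma f := by
  ext x
  simp only [gammaBil, gamma, mul_assoc, pow_two]

theorem gamma_eq_sum (f : V → ℝ) (x : V) :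
    G.gamma f x = 1 / 2 * ∑ y ∈ G.neighbors x, G.p x y * (f y - f x) ^ 2 := by
  simp only [gamma, tsum_p_mul]

theorem gamma_nonneg (f : V → ℝ) (x : V) : 0 ≤ G.gamma f x := by
  rw [gamma_eq_sum]
  exact mul_nonneg one_half_pos.le
    (Finset.sum_nonneg fun y _ => mul_nonneg (G.p_nonneg x y) (sq_nonneg _))

theorem gammaBil_add_right (f g h : V → ℝ) (x : V) :
    G.gammaBil f (g + h) x = G.gammaBil f g x + G.gammaBil f h x := by
  simp only [gammaBil_eq_sum, ← mul_add, ← Finset.sum_add_distrib, Pi.add_apply]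
  congr! 2
  ring

variable {G} in
theorem CDInfty.mono {K K' : ℝ} (hCD : G.CDInfty K') (hK : K ≤ K') : G.CDInfty K :=
  fun f x => (mul_le_mul_of_nonneg_right hK (G.gamma_nonneg f x)).trans (hCD f x)

variable {G} in
theorem CDInfty.two_gammaBil_lap_le (hCD : G.CDInfty 0) (f : V → ℝ) (x : V) :
    2 * G.gammaBil f (G.lap f) x ≤ G.lap (G.gamma f) x := by
  have hΓ₂ := hCD f x
  rw [zero_mul, gamma2] at hΓ₂
  linarith

theorem sum_neighbors_mul_sub_le {c f : V → ℝ} {B C : ℝ} {x : V}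
    (hc : ∀ y ∈ G.neighbors x, c y ∈ Icc 0 C) (hB : ∀ y, f y ≤ B) :
    ∑ y ∈ G.neighbors x, G.p x y * (c y * (f y - f x)) ≤ C * (B - f x) := by
  calc ∑ y ∈ G.neighbors x, G.p x y * (c y * (f y - f x))
      ≤ ∑ y ∈ G.neighbors x, G.p x y * (C * (B - f x)) := by
        refine Finset.sum_le_sum fun y hy => mul_le_mul_of_nonneg_left ?_ (G.p_nonneg x y)
        exact (mul_le_mul_of_nonneg_left (sub_le_sub_right (hB y) _) (hc y hy).1).trans
          (mul_le_mul_of_nonneg_right (hc y hy).2 (sub_nonneg.2 (hB x)))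
    _ = C * (B - f x) := by rw [← Finset.sum_mul, sum_neighbors_p, one_mul]

theorem lap_le {f : V → ℝ} {B : ℝ} (hB : ∀ y, f y ≤ B) (x : V) : G.lap f x ≤ B - f x := by
  simpa only [lap_eq_sum, one_mul] using
    G.sum_neighbors_mul_sub_le (c := fun _ => 1) (x := x) (fun _ _ => ⟨zero_le_one, le_rfl⟩) hB

/-- `f` varies by at most one along every edge, that is, it is `1`-Lipschitz for the graph
distance. -/
def IsOneLipschitz (f : V → ℝ) : Prop := ∀ x y, 0 < G.p x y → |f y - f x| ≤ 1

variable {G} in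
theorem isOneLipschitz_of_gamma_le {α : ℝ} {f : V → ℝ} (hp : ∀ x y, 0 < G.p x y → α ≤ G.p x y)
    (hf : ∀ x, G.gamma f x ≤ α / 2) : G.IsOneLipschitz f := by
  intro x y hxy
  have hterm : G.p x y * (f y - f x) ^ 2 ≤ ∑ z ∈ G.neighbors x, G.p x z * (f z - f x) ^ 2 :=
    Finset.single_le_sum (f := fun z => G.p x z * (f z - f x) ^ 2)
      (fun z _ => mul_nonneg (G.p_nonneg x z) (sq_nonneg _)) (mem_neighbors.2 hxy)
  have hΓ : 1 / 2 * ∑ z ∈ G.neighbors x, G.p x z * (f z - f x) ^ 2 ≤ α / 2 :=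
    G.gamma_eq_sum f x ▸ hf x
  have hmul : G.p x y * (f y - f x) ^ 2 ≤ G.p x y * 1 := by linarith [hp x y hxy]
  exact (sq_le_one_iff_abs_le_one _).1 (le_of_mul_le_mul_left hmul hxy)

variable {G} in
theorem IsOneLipschitz.lap_add_two_gammaBil_le {f g : V → ℝ} {B : ℝ} (hf : G.IsOneLipschitz f)
    (hB : ∀ y, g y ≤ B) (x : V) : G.lap g x + 2 * G.gammaBil f g x ≤ 2 * (B - g x) := by
  have hsum : G.lap g x + 2 * G.gammaBil f g x =
      ∑ y ∈ G.neighbors x, G.p x y * ((1 + (f y - f x)) * (g y - g x)) := by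
    rw [lap_eq_sum, gammaBil_eq_sum, ← mul_assoc, mul_one_div_cancel two_ne_zero, one_mul,
      ← Finset.sum_add_distrib]
    exact Finset.sum_congr rfl fun y _ => by ring
  rw [hsum]
  refine G.sum_neighbors_mul_sub_le (fun y hy => ?_) hB
  have hxy := abs_le.1 (hf x y (mem_neighbors.1 hy))
  constructor <;> linarith

variable {G} in
theorem IsOneLipschitz.two_gammaBil_le {f : V → ℝ} {B : ℝ} (hf : G.IsOneLipschitz f)
    (hCD : G.CDInfty 0) (hB : ∀ y, G.gamma f y ≤ B) (x : V) :
    2 * G.gammaBil f (G.lap f + G.gamma f) x ≤ 2 * (B - G.gamma f x) := by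
  rw [gammaBil_add_right]
  linarith [hCD.two_gammaBil_lap_le f x, hf.lap_add_two_gammaBil_le hB x]

section BoundedOperators

theorem abs_lap_le (f : Linf V) (x : V) : |G.lap f x| ≤ 2 * ‖f‖ := by
  have hf : ∀ y, |f y| ≤ ‖f‖ := lp.norm_apply_le_norm ENNReal.top_ne_zero f
  have hneg : -G.lap f x = G.lap (-f) x := by
    simp only [lap_eq_sum, ← Finset.sum_neg_distrib, Pi.neg_apply]
    exact Finset.sum_congr rfl fun y _ => by ring
  rw [abs_le']
  constructor
  · linarith [G.lap_le (fun y => (abs_le.1 (hf y)).2) x, (abs_le.1 (hf x)).1]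
  · rw [hneg]
    have hle := G.lap_le (f := -f) (fun y => neg_le.1 (abs_le.1 (hf y)).1) x
    rw [Pi.neg_apply] at hle
    linarith [(abs_le.1 (hf x)).2]

/-- The Laplacian as a bounded operator on `L^∞`. -/
noncomputable def lapL : Linf V →L[ℝ] Linf V :=
  LinearMap.mkContinuous
    { toFun := fun f => ⟨G.lap f, memℓp_infty ⟨2 * ‖f‖, forall_mem_range.2 (G.abs_lap_le f)⟩⟩
      map_add' := fun f g => by
        ext x
        change G.lap (f + g : Linf V) x = G.lap f x + G.lap g x
        simp only [lap_eq_sum, ← Finset.sum_add_distrib, lp.coeFn_add, Pi.add_apply]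
        exact Finset.sum_congr rfl fun y _ => by ring
      map_smul' := fun c f => by
        ext x
        change G.lap (c • f : Linf V) x = c * G.lap f x
        simp only [lap_eq_sum, Finset.mul_sum, lp.coeFn_smul, Pi.smul_apply, smul_eq_mul]
        exact Finset.sum_congr rfl fun y _ => by ring }
    2 fun f => lp.norm_le_of_forall_le (by positivity) (G.abs_lap_le f)

theorem coe_lapL (f : Linf V) : ⇑(G.lapL f) = G.lap f := rfl

/-- The carré du champ as a bilinear map on `L^∞`, through the identity
`2 Γ(f, g) = Δ(f g) - f Δg - g Δf`. -/
noncomputable def gammaBilL (f g : Linf V) : Linf V :=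
  (1 / 2 : ℝ) • (G.lapL (f * g) - f * G.lapL g - g * G.lapL f)

theorem coe_gammaBilL (f g : Linf V) : ⇑(G.gammaBilL f g) = G.gammaBil f g := by
  ext x
  change 1 / 2 * (G.lap (f * g : Linf V) x - f x * G.lap g x - g x * G.lap f x) = _
  simp only [gammaBil_eq_sum, lap_eq_sum, Finset.mul_sum, ← Finset.sum_sub_distrib,
    lp.infty_coeFn_mul, Pi.mul_apply]
  exact Finset.sum_congr rfl fun y _ => by ring

theorem coe_gammaBilL_self (f : Linf V) : ⇑(G.gammaBilL f f) = G.gamma f := by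
  rw [coe_gammaBilL, gammaBil_self]

theorem continuous_gammaBilL_self : Continuous fun f => G.gammaBilL f f := by
  unfold gammaBilL
  fun_prop

theorem hasDerivWithinAt_gammaBilL_self {u : ℝ → Linf V} {v : Linf V} {s : Set ℝ}
    {t : ℝ} (hu : HasDerivWithinAt u v s t) :
    HasDerivWithinAt (fun τ => G.gammaBilL (u τ) (u τ)) ((2 : ℝ) • G.gammaBilL (u t) v) s t := by
  have hL : HasDerivWithinAt (fun τ => G.lapL (u τ)) (G.lapL v) s t :=
    G.lapL.hasFDerivAt.comp_hasDerivWithinAt t hu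
  have hL2 : HasDerivWithinAt (fun τ => G.lapL (u τ * u τ)) (G.lapL (v * u t + u t * v)) s t :=
    G.lapL.hasFDerivAt.comp_hasDerivWithinAt t (hu.mul hu)
  refine (((hL2.sub (hu.mul hL)).sub (hu.mul hL)).const_smul (1 / 2 : ℝ)).congr_deriv ?_
  simp only [gammaBilL, map_add, mul_comm v (u t)]
  module

/-- The heat semigroup `P_t = e^{tΔ}` as a bounded operator on `L^∞`. -/
noncomputable def heatL (t : ℝ) : Linf V →L[ℝ] Linf V := NormedSpace.exp (t • G.lapL)

theorem heatL_apply (t : ℝ) (f : Linf V) (x : V) : G.heatL t f x = G.heatSem t f x := by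
  have hiter : ∀ k : ℕ, (G.lap)^[k] f = (G.lapL ^ k) f := by
    intro k
    induction k with
    | zero => rfl
    | succ k ih => rw [Function.iterate_succ_apply', ih, pow_succ']; rfl
  have hsum := (hasSum_exp_smul_apply G.lapL t f).mapL (lp.evalCLM ℝ (fun _ : V => ℝ) ⊤ x)
  refine hsum.tsum_eq.symm.trans (tsum_congr fun k => ?_)
  rw [hiter]
  rfl

theorem heatL_zero (f : Linf V) : G.heatL 0 f = f :=
  exp_zero_smul_apply G.lapL f

theorem hasDerivAt_heatL (f : Linf V) (t : ℝ) :
    HasDerivAt (fun s => G.heatL s f) (G.lapL (G.heatL t f)) t :=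
  hasDerivAt_exp_smul_apply G.lapL f t

end BoundedOperators

section Comparison

theorem nonpos_of_deriv_le_lap {z z' : ℝ → Linf V} (hz : ContinuousOn z (Ici 0))
    (hz' : ∀ t ≥ 0, HasDerivWithinAt z (z' t) (Ici t) t) (hz0 : ∀ x, z 0 x ≤ 0)
    (hsub : ∀ t ≥ 0, ∀ x, z' t x ≤ G.lap (z t) x) {t : ℝ} (ht : 0 ≤ t) (x : V) :
    z t x ≤ 0 := by
  have : Nonempty V := ⟨x⟩
  refine le_of_forall_gt fun ε hε => (Linf.apply_le_iSup (z t) x).trans_lt ?_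
  refine Linf.iSup_lt_of_hasDerivWithinAt zero_le_one (hz.mono Icc_subset_Ici_self)
    (fun s hs => hz' s hs.1) (fun s hs _ y => ?_) ?_ ⟨ht, le_rfl⟩
  · rw [one_mul]
    exact (hsub s hs.1 y).trans (G.lap_le (Linf.apply_le_iSup (z s)) y)
  · exact (ciSup_le hz0).trans_lt hε

theorem le_heatL_of_deriv_le_lap {w w' : ℝ → Linf V} (hw : ContinuousOn w (Ici 0))
    (hw' : ∀ t ≥ 0, HasDerivWithinAt w (w' t) (Ici t) t)
    (hsub : ∀ t ≥ 0, ∀ x, w' t x ≤ G.lap (w t) x) {t : ℝ} (ht : 0 ≤ t) (x : V) :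
    w t x ≤ G.heatL t (w 0) x := by
  refine sub_nonpos.1 (G.nonpos_of_deriv_le_lap (z := fun s => w s - G.heatL s (w 0))
    (hw.sub fun s _ => (G.hasDerivAt_heatL _ s).continuousAt.continuousWithinAt)
    (fun s hs => (hw' s hs).sub (G.hasDerivAt_heatL _ s).hasDerivWithinAt)
    (fun y => by rw [heatL_zero, sub_self]; exact le_rfl) (fun s hs y => ?_) ht x)
  rw [← coe_lapL, map_sub]
  exact sub_le_sub_right (hsub s hs y) _

theorem heatL_le_of_lap_le_deriv {w w' : ℝ → Linf V} (hw : ContinuousOn w (Ici 0))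
    (hw' : ∀ t ≥ 0, HasDerivWithinAt w (w' t) (Ici t) t)
    (hsuper : ∀ t ≥ 0, ∀ x, G.lap (w t) x ≤ w' t x) {t : ℝ} (ht : 0 ≤ t) (x : V) :
    G.heatL t (w 0) x ≤ w t x := by
  have hneg := G.le_heatL_of_deriv_le_lap hw.neg (fun s hs => (hw' s hs).neg)
    (fun s hs y => ?_) ht x
  · rw [Pi.neg_apply, Pi.neg_apply, map_neg] at hneg
    exact neg_le_neg_iff.1 hneg
  · rw [Pi.neg_apply, ← coe_lapL, map_neg]
    exact neg_le_neg (hsuper s hs y)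

end Comparison

section Exponential

theorem mul_add_sq_div_two_le_exp_sub_one {γ d : ℝ} (hγ : 2 ≤ γ) (hd : -1 ≤ d) :
    γ * (d + d ^ 2 / 2) ≤ Real.exp (γ * d) - 1 := by
  rcases le_total (-2) (γ * d) with hs | hs
  · have hsq : (1 + γ * d / 2) ^ 2 ≤ Real.exp (γ * d) := by
      have := Real.add_one_le_exp (γ * d / 2)
      calc (1 + γ * d / 2) ^ 2 ≤ Real.exp (γ * d / 2) ^ 2 :=
            pow_le_pow_left₀ (by linarith) (by linarith) 2
        _ = Real.exp (γ * d) := by rw [← Real.exp_nat_mul]; congr 1; push_cast; ring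
    nlinarith [mul_nonneg (mul_nonneg (by linarith : 0 ≤ γ) (sub_nonneg.2 hγ)) (sq_nonneg d)]
  · have hexp := Real.exp_pos (γ * d)
    nlinarith

theorem exp_le_one_add_add_sq_mul_exp {s c : ℝ} (hc : 0 ≤ c) (hsc : s ≤ c) :
    Real.exp s ≤ 1 + s + s ^ 2 / 2 * Real.exp c := by
  rcases eq_or_ne 0 s with rfl | hs
  · simp
  obtain ⟨ξ, hξ, htaylor⟩ := taylor_mean_remainder_lagrange_iteratedDeriv (n := 1) hs
    Real.contDiff_exp.contDiffOn
  have hξc : Real.exp ξ ≤ Real.exp c := Real.exp_le_exp.2 (hξ.2.le.trans (max_le hc hsc))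
  have hderiv : derivWithin Real.exp (uIcc 0 s) 0 = 1 := by
    rw [(Real.hasDerivAt_exp 0).hasDerivWithinAt.derivWithin
      (uniqueDiffOn_uIcc hs 0 left_mem_uIcc), Real.exp_zero]
  simp only [taylorWithinEval_succ, taylor_within_zero_eval, Real.exp_zero, Nat.cast_zero,
    zero_add, Nat.factorial_zero, Nat.cast_one, mul_one, inv_one, sub_zero, pow_one, one_mul,
    iteratedDerivWithin_one, hderiv, smul_eq_mul, Nat.reduceAdd, iteratedDeriv_eq_iterate,
    Real.iter_deriv_exp, Nat.factorial_two, Nat.cast_ofNat] at htaylor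
  linarith [mul_le_mul_of_nonneg_left hξc (sq_nonneg s)]

theorem exp_sub_one_le_mul_add_sq_div_two {γ d : ℝ} (hγ : 0 ≤ γ) (hγ1 : γ * Real.exp γ ≤ 1)
    (hd : d ≤ 1) : Real.exp (γ * d) - 1 ≤ γ * (d + d ^ 2 / 2) := by
  have hexp := exp_le_one_add_add_sq_mul_exp hγ (mul_le_of_le_one_right hγ hd)
  have hcoeff := mul_le_mul_of_nonneg_left hγ1 (mul_nonneg hγ (sq_nonneg d))
  linarith

theorem lap_exp (γ : ℝ) (f : V → ℝ) (x : V) :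
    G.lap (fun y => Real.exp (γ * f y)) x = Real.exp (γ * f x) *
      ∑ y ∈ G.neighbors x, G.p x y * (Real.exp (γ * (f y - f x)) - 1) := by
  rw [lap_eq_sum, Finset.mul_sum]
  refine Finset.sum_congr rfl fun y _ => ?_
  rw [mul_sub γ, Real.exp_sub]
  field_simp

theorem mul_lap_add_gamma (γ : ℝ) (f : V → ℝ) (x : V) :
    γ * (G.lap f x + G.gamma f x) = ∑ y ∈ G.neighbors x,
      G.p x y * (γ * ((f y - f x) + (f y - f x) ^ 2 / 2)) := by
  rw [lap_eq_sum, gamma_eq_sum, Finset.mul_sum, ← Finset.sum_add_distrib, Finset.mul_sum]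
  exact Finset.sum_congr rfl fun y _ => by ring

theorem exp_smul_mul_apply (γ : ℝ) (f : Linf V) (x : V) :
    (NormedSpace.exp (γ • f) * γ • (G.lapL f + G.gammaBilL f f) : Linf V) x =
      Real.exp (γ * f x) * (γ * (G.lap f x + G.gamma f x)) := by
  change (NormedSpace.exp (γ • f) : Linf V) x * (γ * (G.lap f x + G.gammaBilL f f x)) = _
  rw [Linf.coe_exp_smul, coe_gammaBilL_self]

variable {G} {γ : ℝ} {f : V → ℝ}

theorem IsOneLipschitz.exp_mul_le_lap_exp (hf : G.IsOneLipschitz f) (hγ : 2 ≤ γ) (x : V) :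
    Real.exp (γ * f x) * (γ * (G.lap f x + G.gamma f x)) ≤
      G.lap (fun y => Real.exp (γ * f y)) x := by
  rw [lap_exp, mul_lap_add_gamma]
  gcongr with y hy
  · exact G.p_nonneg x y
  · exact mul_add_sq_div_two_le_exp_sub_one hγ (abs_le.1 (hf x y (mem_neighbors.1 hy))).1

theorem IsOneLipschitz.lap_exp_le_exp_mul (hf : G.IsOneLipschitz f) (hγ : 0 ≤ γ)
    (hγ1 : γ * Real.exp γ ≤ 1) (x : V) :
    G.lap (fun y => Real.exp (γ * f y)) x ≤
      Real.exp (γ * f x) * (γ * (G.lap f x + G.gamma f x)) := by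
  rw [lap_exp, mul_lap_add_gamma]
  gcongr with y hy
  · exact G.p_nonneg x y
  · exact exp_sub_one_le_mul_add_sq_div_two hγ hγ1 (abs_le.1 (hf x y (mem_neighbors.1 hy))).2

end Exponential

end WeightedGraph

namespace IsMHESolution

variable {V : Type*} {G : WeightedGraph V} {u u' : ℝ → Linf V} {u₀ : Linf V}

theorem hasDerivWithinAt (hu : IsMHESolution G u u' u₀) {t : ℝ} (ht : 0 ≤ t) :
    HasDerivWithinAt u (G.lapL (u t) + G.gammaBilL (u t) (u t)) (Ici t) t := by
  have hderiv : ∀ s > 0, HasDerivAt u (G.lapL (u s) + G.gammaBilL (u s) (u s)) s := by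
    intro s hs
    convert hu.hasDeriv s hs using 1
    ext x
    rw [hu.eqn s hs x, lp.coeFn_add, G.coe_gammaBilL_self]
    rfl
  rcases ht.eq_or_lt with rfl | ht
  · have hcont : ContinuousWithinAt u (Ioi 0) 0 :=
      (hu.cont 0 self_mem_Ici).mono Ioi_subset_Ici_self
    refine hasDerivWithinAt_Ici_of_tendsto_deriv
      (fun s hs => (hderiv s hs).differentiableAt.differentiableWithinAt) hcont
      self_mem_nhdsWithin ?_
    refine Tendsto.congr' ?_
      ((G.lapL.continuous.add G.continuous_gammaBilL_self).continuousAt.tendsto.comp hcont)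
    filter_upwards [self_mem_nhdsWithin] with s hs using (hderiv s hs).deriv.symm
  · exact (hderiv t ht).hasDerivWithinAt

theorem iSup_gamma_lt [Nonempty V] {α : ℝ} (hp : ∀ x y, 0 < G.p x y → α ≤ G.p x y)
    (hCD : G.CDInfty 0) (h₀ : supNorm (G.gamma u₀) < α / 2) (hu : IsMHESolution G u u' u₀)
    {t : ℝ} (ht : 0 ≤ t) : ⨆ x, G.gamma (u t) x < α / 2 := by
  simp only [← G.coe_gammaBilL_self] at h₀ ⊢
  refine Linf.iSup_lt_of_hasDerivWithinAt (g := fun s => G.gammaBilL (u s) (u s)) zero_le_two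
    (G.continuous_gammaBilL_self.comp_continuousOn (hu.cont.mono Icc_subset_Ici_self))
    (fun s hs => G.hasDerivWithinAt_gammaBilL_self (hu.hasDerivWithinAt hs.1))
    (fun s _ hlt x => ?_) ?_ ⟨ht, le_rfl⟩
  · have hle := Linf.apply_le_iSup (G.gammaBilL (u s) (u s))
    rw [lp.coeFn_smul, Pi.smul_apply, smul_eq_mul, G.coe_gammaBilL, lp.coeFn_add,
      G.coe_lapL]
    simp only [G.coe_gammaBilL_self] at hle hlt ⊢
    have hLip := WeightedGraph.isOneLipschitz_of_gamma_le hp fun y => (hle y).trans hlt.le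
    exact hLip.two_gammaBil_le hCD hle x
  · rw [hu.init]
    exact (ciSup_le (Linf.apply_le_supNorm _)).trans_lt h₀

theorem isOneLipschitz {α : ℝ} (hp : ∀ x y, 0 < G.p x y → α ≤ G.p x y) (hCD : G.CDInfty 0)
    (h₀ : supNorm (G.gamma u₀) < α / 2) (hu : IsMHESolution G u u' u₀) {t : ℝ} (ht : 0 ≤ t) :
    G.IsOneLipschitz (u t) := by
  refine WeightedGraph.isOneLipschitz_of_gamma_le hp fun x => ?_
  have : Nonempty V := ⟨x⟩
  have hle := Linf.apply_le_iSup (G.gammaBilL (u t) (u t)) x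
  rw [G.coe_gammaBilL_self] at hle
  exact hle.trans (hu.iSup_gamma_lt hp hCD h₀ ht).le

theorem continuousOn_exp (hu : IsMHESolution G u u' u₀) (γ : ℝ) :
    ContinuousOn (fun t => NormedSpace.exp (γ • u t)) (Ici 0) :=
  NormedSpace.exp_continuous.comp_continuousOn (hu.cont.const_smul γ)

theorem hasDerivWithinAt_exp (hu : IsMHESolution G u u' u₀) (γ : ℝ) {t : ℝ}
    (ht : 0 ≤ t) : HasDerivWithinAt (fun s => NormedSpace.exp (γ • u s))
      (NormedSpace.exp (γ • u t) * γ • (G.lapL (u t) + G.gammaBilL (u t) (u t))) (Ici t) t := by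
  have hγu : HasDerivWithinAt (fun s => γ • u s)
      (γ • (G.lapL (u t) + G.gammaBilL (u t) (u t))) (Ici t) t :=
    (hu.hasDerivWithinAt ht).const_smul γ
  exact (hasFDerivAt_exp (𝕂 := ℝ)).comp_hasDerivWithinAt t hγu

theorem exp_le_heatSem (hu : IsMHESolution G u u' u₀)
    (hLip : ∀ t ≥ 0, G.IsOneLipschitz (u t)) {γ : ℝ} (hγ : 2 ≤ γ) {t : ℝ} (ht : 0 ≤ t) (x : V) :
    Real.exp (γ * u t x) ≤ G.heatSem t (fun y => Real.exp (γ * u₀ y)) x := by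
  have hle := G.le_heatL_of_deriv_le_lap (hu.continuousOn_exp γ)
    (fun s hs => hu.hasDerivWithinAt_exp γ hs) (fun s hs y => ?_) ht x
  · rwa [G.heatL_apply, Linf.coe_exp_smul, Linf.coe_exp_smul, hu.init] at hle
  · rw [G.exp_smul_mul_apply, Linf.coe_exp_smul]
    exact (hLip s hs).exp_mul_le_lap_exp hγ y

theorem heatSem_exp_le (hu : IsMHESolution G u u' u₀)
    (hLip : ∀ t ≥ 0, G.IsOneLipschitz (u t)) {γ : ℝ} (hγ : 0 ≤ γ) (hγ1 : γ * Real.exp γ ≤ 1)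
    {t : ℝ} (ht : 0 ≤ t) (x : V) :
    G.heatSem t (fun y => Real.exp (γ * u₀ y)) x ≤ Real.exp (γ * u t x) := by
  have hle := G.heatL_le_of_lap_le_deriv (hu.continuousOn_exp γ)
    (fun s hs => hu.hasDerivWithinAt_exp γ hs) (fun s hs y => ?_) ht x
  · rwa [G.heatL_apply, Linf.coe_exp_smul, Linf.coe_exp_smul, hu.init] at hle
  · rw [G.exp_smul_mul_apply, Linf.coe_exp_smul]
    exact (hLip s hs).lap_exp_le_exp_mul hγ hγ1 y

end IsMHESolution

theorem semigroup_comparison_general {V : Type*} {G : WeightedGraph V} {α : ℝ}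
    (hp : ∀ x y, 0 < G.p x y → α ≤ G.p x y) (hCD : G.CDInfty 0) {u₀ : Linf V}
    (h₀ : supNorm (G.gamma u₀) < α / 2) {u u' : ℝ → Linf V} (hu : IsMHESolution G u u' u₀) :
    (∀ γ : ℝ, 2 ≤ γ → ∀ t : ℝ, 0 ≤ t → ∀ x : V,
      Real.exp (γ * u t x) ≤ G.heatSem t (fun y => Real.exp (γ * u₀ y)) x) ∧
    (∀ γ : ℝ, 0 ≤ γ → γ * Real.exp γ ≤ 1 → ∀ t : ℝ, 0 ≤ t → ∀ x : V,
      G.heatSem t (fun y => Real.exp (γ * u₀ y)) x ≤ Real.exp (γ * u t x)) := by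
  have hLip : ∀ t ≥ 0, G.IsOneLipschitz (u t) := fun t ht => hu.isOneLipschitz hp hCD h₀ ht
  exact ⟨fun γ hγ t ht x => hu.exp_le_heatSem hLip hγ ht x,
    fun γ hγ hγ1 t ht x => hu.heatSem_exp_le hLip hγ hγ1 ht x⟩

/-- **semigroup comparison.** There exist constants `0 < γ₀ ≤ γ₁`
such that for every weighted graph with bounded geometry (constant `α > 0`)
satisfying `CD(K,∞)` with `K ≥ 0`, every `u₀ ∈ L^∞(V,μ)` with `‖Γu₀‖_∞ < α/2` and
`u` the solution of the modified heat equation with initial data `u₀`: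
for `γ ≥ γ₁`, `P_t(e^{γu₀}) ≥ e^{γ u(t)}`, and for `0 < γ ≤ γ₀`,
`P_t(e^{γu₀}) ≤ e^{γ u(t)}` (pointwise, for all `t > 0`). -/
theorem semigroup_comparison :
    ∃ γ₀ γ₁ : ℝ, 0 < γ₀ ∧ γ₀ ≤ γ₁ ∧
      ∀ (V : Type) [Countable V] (G : WeightedGraph V) (α K : ℝ),
        G.BoundedGeometry α → 0 ≤ K → G.CDInfty K →
        ∀ u₀ : Linf V, supNorm (G.gamma (fun x => u₀ x)) < α / 2 →
        ∀ u u' : ℝ → Linf V, IsMHESolution G u u' u₀ →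
          (∀ γ : ℝ, γ₁ ≤ γ → ∀ t : ℝ, 0 < t → ∀ x : V,
            Real.exp (γ * u t x) ≤ G.heatSem t (fun y => Real.exp (γ * u₀ y)) x) ∧
          (∀ γ : ℝ, 0 < γ → γ ≤ γ₀ → ∀ t : ℝ, 0 < t → ∀ x : V,
            G.heatSem t (fun y => Real.exp (γ * u₀ y)) x ≤ Real.exp (γ * u t x)) := by
  refine ⟨1 / 2, 2, by norm_num, by norm_num, fun V _ G α K hG hK hCD u₀ h₀ u u' hu => ?_⟩
  obtain ⟨hlarge, hsmall⟩ := semigroup_comparison_general hG.2.1 (hCD.mono hK) h₀ hu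
  refine ⟨fun γ hγ t ht => hlarge γ hγ t ht.le,
    fun γ hγ0 hγ t ht => hsmall γ hγ0.le ?_ t ht.le⟩
  calc γ * Real.exp γ ≤ Real.exp (-γ) * Real.exp γ := by
        gcongr
        linarith [Real.one_sub_le_exp_neg γ]
    _ = 1 := by rw [← Real.exp_add, neg_add_cancel, Real.exp_zero]
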